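/- Let G be a finite group and ψ : R → S a centralizing G-Galois extension with Galois basis (x₁,…,x_m; y₁,…,y_m). Then the Nakayama automorphism ν : S → S associated to the Frobenius system ((xᵢ, yᵢ), tr), given by ν(d) = Σ_{g∈G} Σ_{i=1}^m g(xᵢ d)·yᵢ, leaves ψ(R) pointwise invariant: ν(ψ(r)) = ψ(r) for all r ∈ R. -/

import Mathlib

open scoped TensorProduct

namespace Nuss
noncomputable section

variable {R : Type*} [CommRing R] {S : Type*} [Ring S] [Algebra R S]
variable {G : Type*} [Group G]

/-- The Galois map `Γ : S ⊗[R] S →ₗ[R] Map(G,S)`, `Γ(s ⊗ t)(g) = s⬝g(t)`, for a centralizing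
extension, i.e. an `R`-algebra `S`, with `G` acting by `R`-algebra automorphisms. -/
def gammaAlg (act : G →* (S ≃ₐ[R] S)) : S ⊗[R] S →ₗ[R] (G → S) :=
  TensorProduct.lift <| LinearMap.mk₂ R (fun s t => fun g => s * act g t)
    (fun s s' t => by funext g; simp [add_mul])
    (fun c s t => by funext g; simp [Algebra.smul_mul_assoc])
    (fun s t t' => by funext g; simp [map_add, mul_add])
    (fun c s t => by funext g; simp [map_smul, Algebra.mul_smul_comm])

@[simp] lemma gammaAlg_tmul (act : G →* (S ≃ₐ[R] S)) (s t : S) :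
    gammaAlg act (s ⊗ₜ[R] t) = fun g => s * act g t := rfl

/-- The function `δ_e ∈ Map(G, S)`: `1` at the neutral element, `0` elsewhere. -/
def deltaE' (G S : Type*) [Group G] [Ring S] : G → S :=
  fun g => letI := Classical.decEq G; if g = 1 then 1 else 0

/-- A centralizing `G`-Galois extension: `S` is an `R`-algebra (so that the structure morphism
`ψ = algebraMap R S` lands in the centre of `S`), the finite group `G` acts on `S` by
`R`-algebra automorphisms (equivalently, by ring automorphisms fixing `ψ(R)` pointwise),
`S` is a faithfully flat `R`-module via `ψ`, and the Galois map is bijective. -/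
structure IsCentralizingGaloisExtension (G : Type*) [Group G] [Finite G]
    (R S : Type*) [CommRing R] [Ring S] [Algebra R S] (act : G →* (S ≃ₐ[R] S)) : Prop where
  faithfullyFlat : Module.FaithfullyFlat R S
  bijective : Function.Bijective (gammaAlg act)

/-- A central extension: the structure morphism maps `R` bijectively onto the centre of `S`. -/
def IsCentralExtension (R S : Type*) [CommRing R] [Ring S] [Algebra R S] : Prop :=
  Function.Injective (algebraMap R S) ∧ (algebraMap R S).range = Subring.center S

/-- A separable extension: the multiplication `μ : S ⊗[R] S → S` splits as a morphism of
`S`-bimodules; equivalently there is a Casimir element `η` with `μ(η) = 1`. -/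
def IsSeparableExtension (R S : Type*) [CommRing R] [Ring S] [Algebra R S] : Prop :=
  ∃ η : S ⊗[R] S, (∀ s : S, (s ⊗ₜ[R] (1 : S)) * η = η * ((1 : S) ⊗ₜ[R] s)) ∧
    LinearMap.mul' R S η = 1

/-- A `G`-Galois-Azumaya extension: a central `G`-Galois extension `R → S` such that `S` is
an Azumaya (central separable) `R`-algebra. -/
def IsGaloisAzumayaExtension (G : Type*) [Group G] [Finite G]
    (R S : Type*) [CommRing R] [Ring S] [Algebra R S] (act : G →* (S ≃ₐ[R] S)) : Prop :=
  IsCentralizingGaloisExtension G R S act ∧ IsCentralExtension R S ∧ IsSeparableExtension R S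

end
end Nuss

namespace Nuss
noncomputable section

/-! Applying `g` to the value of `Γ(η_e) = δ_e` at `g⁻¹` gives `Σᵢ g(xᵢ) yᵢ = δ_e(g)`.
Multiplying by `g(d)` on the left and summing over `g` yields the dual basis identity
`Σᵢ tr(d xᵢ) yᵢ = d`. If `d` commutes with every `xᵢ`, its left-hand side is `ν(d)`. -/

section

variable {R : Type*} [CommRing R] {S : Type*} [Ring S] [Algebra R S]
variable {G : Type*} [Group G] {ι : Type*} [Fintype ι] {x y : ι → S}

lemma deltaE'_eq_single [DecidableEq G] : deltaE' G S = Pi.single 1 1 := by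
  ext g
  rw [deltaE', Pi.single_apply]
  congr

lemma act_deltaE'_inv (act : G →* (S ≃ₐ[R] S)) (g : G) :
    act g (deltaE' G S g⁻¹) = deltaE' G S g := by
  classical
  simp only [deltaE'_eq_single, Pi.single_apply, inv_eq_one, apply_ite (act g), map_one, map_zero]

lemma act_gammaAlg_sum_tmul_inv (act : G →* (S ≃ₐ[R] S)) (x y : ι → S) (g : G) :
    act g (gammaAlg act (∑ i, x i ⊗ₜ[R] y i) g⁻¹) = ∑ i, act g (x i) * y i := by
  have act_act_inv (s : S) : act g (act g⁻¹ s) = s := by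
    rw [← AlgEquiv.mul_apply, ← map_mul, mul_inv_cancel, map_one, AlgEquiv.one_apply]
  simp only [map_sum, gammaAlg_tmul, Finset.sum_apply, map_mul, act_act_inv]

lemma sum_act_mul_eq_deltaE' (act : G →* (S ≃ₐ[R] S))
    (hbasis : gammaAlg act (∑ i, x i ⊗ₜ[R] y i) = deltaE' G S) (g : G) :
    ∑ i, act g (x i) * y i = deltaE' G S g := by
  rw [← act_gammaAlg_sum_tmul_inv, hbasis, act_deltaE'_inv]

lemma sum_act_mul_mul_eq_self [Fintype G] (act : G →* (S ≃ₐ[R] S))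
    (hbasis : gammaAlg act (∑ i, x i ⊗ₜ[R] y i) = deltaE' G S) (d : S) :
    ∑ g, ∑ i, act g (d * x i) * y i = d := by
  classical
  calc ∑ g, ∑ i, act g (d * x i) * y i
      = ∑ g, act g d * ∑ i, act g (x i) * y i := by
        simp only [map_mul, mul_assoc, Finset.mul_sum]
    _ = ∑ g, act g d * (Pi.single 1 1 : G → S) g := by
        simp only [sum_act_mul_eq_deltaE' act hbasis, deltaE'_eq_single]
    _ = d := by
        simp only [Pi.single_apply, mul_ite, mul_one, mul_zero, Finset.sum_ite_eq',
          Finset.mem_univ, if_true, map_one, AlgEquiv.one_apply]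

theorem nakayama_fixes_base_general [Fintype G] (act : G →* (S ≃ₐ[R] S))
    (hbasis : gammaAlg act (∑ i, x i ⊗ₜ[R] y i) = deltaE' G S)
    {d : S} (hd : ∀ i, Commute (x i) d) :
    ∑ g, ∑ i, act g (x i * d) * y i = d := by
  simpa only [(hd _).eq] using sum_act_mul_mul_eq_self act hbasis d

end

/-- For a centralizing `G`-Galois extension `ψ : R → S` with Galois basis
`(x₁,…,x_m; y₁,…,y_m)`, the Nakayama automorphism
`ν(d) = Σ_{g∈G} Σ_{i=1}^m g(xᵢ d) ⬝ yᵢ` associated to the Frobenius system `((xᵢ,yᵢ), tr)`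
leaves `ψ(R)` pointwise invariant: `ν(ψ(r)) = ψ(r)` for all `r ∈ R`. -/
theorem nakayama_fixes_base
    {R : Type*} [CommRing R] {S : Type*} [Ring S] [Algebra R S]
    {G : Type*} [Group G] [Fintype G]
    (act : G →* (S ≃ₐ[R] S))
    (hGal : IsCentralizingGaloisExtension G R S act)
    {m : ℕ} (x y : Fin m → S)
    (hbasis : gammaAlg act (∑ i, (x i) ⊗ₜ[R] (y i)) = deltaE' G S) :
    ∀ r : R, (∑ g : G, ∑ i, act g (x i * algebraMap R S r) * y i) = algebraMap R S r :=
  fun r => nakayama_fixes_base_general act hbasis fun i => (Algebra.commutes r (x i)).symm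

end
end Nuss
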